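/- Under the stated setup and assumptions, for every p ∈ [1,∞] the Schatten-p norm of the sines of the canonical angles between the column spaces of V_k and V̂ satisfies (Σ_{j=1}^k sin^p ν_j)^{1/p} ≤ γ_k^{2q+1} · (‖Σ_⊥‖_p / σ_k) · ‖Ω_2Ω_1†‖₂ (with the maximum of the sines on the left for p = ∞). -/

import Mathlib

open scoped ENNReal
open Matrix

/-- The `j`-th largest singular value (0-indexed) of a complex matrix,
obtained as the decreasingly sorted square roots of the eigenvalues of `Mᴴ * M`. -/
noncomputable def sval {m n : ℕ} (M : Matrix (Fin m) (Fin n) ℂ) (j : ℕ) : ℝ :=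
  (List.insertionSort (· ≥ ·)
    ((List.ofFn (Matrix.isHermitian_conjTranspose_mul_self M).eigenvalues).map Real.sqrt)).getD j 0

/-- The Schatten-`p` norm (`p = ∞` gives the spectral norm). -/
noncomputable def schatten {m n : ℕ} (p : ℝ≥0∞) (M : Matrix (Fin m) (Fin n) ℂ) : ℝ :=
  if p = ⊤ then sval M 0
  else (∑ j ∈ Finset.range n, sval M j ^ p.toReal) ^ (1 / p.toReal)

/-- Moore–Penrose pseudoinverse of a full-row-rank matrix. -/
noncomputable def rpinv {a b : ℕ} (M : Matrix (Fin a) (Fin b) ℂ) : Matrix (Fin b) (Fin a) ℂ :=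
  Mᴴ * (M * Mᴴ)⁻¹

/-- Rectangular diagonal matrix with entries `σ (off), σ (off+1), …` on the diagonal. -/
noncomputable def diagRect (σ : ℕ → ℝ) (off a b : ℕ) : Matrix (Fin a) (Fin b) ℂ :=
  Matrix.of fun i j => if (i : ℕ) = (j : ℕ) then (σ (off + (i : ℕ)) : ℂ) else 0

/-- The first `b` columns of a matrix with `b + c` columns. -/
def colsL {a b c : ℕ} (M : Matrix (Fin a) (Fin (b + c)) ℂ) : Matrix (Fin a) (Fin b) ℂ :=
  M.submatrix id (Fin.castAdd c)

/-- The last `c` columns of a matrix with `b + c` columns. -/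
def colsR {a b c : ℕ} (M : Matrix (Fin a) (Fin (b + c)) ℂ) : Matrix (Fin a) (Fin c) ℂ :=
  M.submatrix id (Fin.natAdd b)

theorem List.Pairwise.getD_le_iff_countP_le {l : List ℝ} (hl : l.Pairwise (· ≥ ·)) {t : ℝ}
    (ht : 0 ≤ t) (j : ℕ) : l.getD j 0 ≤ t ↔ l.countP (t < ·) ≤ j := by
  induction l generalizing j with
  | nil => simpa using ht
  | cons a l ih =>
    obtain ⟨ha, hl⟩ := List.pairwise_cons.1 hl
    by_cases hat : t < a
    · cases j with
      | zero => simp [hat]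
      | succ j => simpa [hat] using ih hl j
    · have hzero : l.countP (t < ·) = 0 := by
        simpa [List.countP_eq_zero] using fun b hb => (ha b hb).trans (not_lt.1 hat)
      cases j with
      | zero => simpa [hat, hzero] using not_lt.1 hat
      | succ j =>
        have hle : l.getD j 0 ≤ t := (ih hl j).2 (hzero ▸ Nat.zero_le j)
        simpa [hat, hzero] using hle

theorem List.countP_ofFn_eq_card {α : Type*} {n : ℕ} (f : Fin n → α) (P : α → Bool) :
    (List.ofFn f).countP P = Fintype.card {i // P (f i)} := by
  rw [Fintype.card_subtype, List.ofFn_eq_map, List.countP_map, List.countP_eq_length_filter,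
    ← List.toFinset_card_of_nodup ((List.nodup_finRange n).filter _)]
  congr 1
  ext i
  simp

/-- The eigenvalues of `Mᴴ * M`. -/
noncomputable def gramEigenvalues {m n : ℕ} (M : Matrix (Fin m) (Fin n) ℂ) : Fin n → ℝ :=
  (Matrix.isHermitian_conjTranspose_mul_self M).eigenvalues

/-- A unitary matrix whose columns are eigenvectors of `Mᴴ * M`. -/
noncomputable def gramEigenvectors {m n : ℕ} (M : Matrix (Fin m) (Fin n) ℂ) :
    Matrix (Fin n) (Fin n) ℂ :=
  (Matrix.isHermitian_conjTranspose_mul_self M).eigenvectorUnitary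

section SingularValues

variable {m n : ℕ} (M : Matrix (Fin m) (Fin n) ℂ)

open scoped ComplexOrder in
theorem gramEigenvalues_nonneg (i : Fin n) : 0 ≤ gramEigenvalues M i :=
  (Matrix.posSemidef_conjTranspose_mul_self M).eigenvalues_nonneg i

theorem conjTranspose_mul_gramEigenvectors :
    (gramEigenvectors M)ᴴ * gramEigenvectors M = 1 :=
  Unitary.coe_star_mul_self (Matrix.isHermitian_conjTranspose_mul_self M).eigenvectorUnitary

theorem gramEigenvectors_mul_conjTranspose :
    gramEigenvectors M * (gramEigenvectors M)ᴴ = 1 :=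
  Unitary.coe_mul_star_self (Matrix.isHermitian_conjTranspose_mul_self M).eigenvectorUnitary

theorem conjTranspose_mul_self_eq_gram : Mᴴ * M =
    gramEigenvectors M * diagonal (fun i => (gramEigenvalues M i : ℂ)) *
      (gramEigenvectors M)ᴴ :=
  (Matrix.isHermitian_conjTranspose_mul_self M).spectral_theorem

theorem sval_le_iff {t : ℝ} (ht : 0 ≤ t) (j : ℕ) :
    sval M j ≤ t ↔ Fintype.card {i // t < √(gramEigenvalues M i)} ≤ j := by
  rw [sval, (List.pairwise_insertionSort _ _).getD_le_iff_countP_le ht,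
    (List.perm_insertionSort _ _).countP_eq, List.map_ofFn, List.countP_ofFn_eq_card]
  simp only [decide_eq_true_eq, Function.comp_apply]
  rfl

theorem sval_nonneg (j : ℕ) : 0 ≤ sval M j := by
  rw [sval]
  by_cases hj : j < (List.insertionSort (· ≥ ·) ((List.ofFn
      (Matrix.isHermitian_conjTranspose_mul_self M).eigenvalues).map Real.sqrt)).length
  · rw [List.getD_eq_getElem _ _ hj]
    have := List.getElem_mem hj
    rw [List.mem_insertionSort, List.mem_map] at this
    obtain ⟨x, -, hx⟩ := this
    exact hx ▸ Real.sqrt_nonneg x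
  · rw [List.getD_eq_default _ _ (not_lt.1 hj)]

theorem sval_eq_zero_of_le {j : ℕ} (hj : n ≤ j) : sval M j = 0 := by
  refine le_antisymm ((sval_le_iff M le_rfl j).2 (le_trans ?_ hj)) (sval_nonneg M j)
  simpa using Fintype.card_subtype_le (fun i : Fin n => 0 < √(gramEigenvalues M i))

theorem sqrt_gramEigenvalues_le_sval_zero (i : Fin n) : √(gramEigenvalues M i) ≤ sval M 0 := by
  have h := (sval_le_iff M (sval_nonneg M 0) 0).1 le_rfl
  rw [Nat.le_zero, Fintype.card_eq_zero_iff] at h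
  exact not_lt.1 fun hi => h.false ⟨i, hi⟩

theorem norm_sq_toLp_eq_re_dotProduct {ι : Type*} [Fintype ι] (v : ι → ℂ) :
    ‖WithLp.toLp 2 v‖ ^ 2 = (star v ⬝ᵥ v).re := by
  simp [EuclideanSpace.norm_sq_eq, dotProduct, ← Complex.normSq_eq_norm_sq, Complex.normSq_apply]

theorem norm_sq_mulVec_eq_sum (v : Fin n → ℂ) : ‖WithLp.toLp 2 (M *ᵥ v)‖ ^ 2 =
    ∑ i, gramEigenvalues M i * ‖((gramEigenvectors M)ᴴ *ᵥ v) i‖ ^ 2 := by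
  have h : star (M *ᵥ v) ⬝ᵥ (M *ᵥ v) = star ((gramEigenvectors M)ᴴ *ᵥ v) ⬝ᵥ
      (diagonal (fun i => (gramEigenvalues M i : ℂ)) *ᵥ ((gramEigenvectors M)ᴴ *ᵥ v)) := by
    rw [star_mulVec, star_mulVec, ← dotProduct_mulVec, ← dotProduct_mulVec, mulVec_mulVec,
      mulVec_mulVec, mulVec_mulVec, conjTranspose_conjTranspose,
      conjTranspose_mul_self_eq_gram]
  rw [norm_sq_toLp_eq_re_dotProduct, h, dotProduct, Complex.re_sum]
  refine Finset.sum_congr rfl fun i _ => ?_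
  simp only [mulVec_diagonal, Pi.star_apply, ← Complex.normSq_eq_norm_sq, Complex.normSq_apply]
  simp
  ring

theorem norm_sq_eq_sum_gramEigenvectors (v : Fin n → ℂ) : ‖WithLp.toLp 2 v‖ ^ 2 =
    ∑ i, ‖((gramEigenvectors M)ᴴ *ᵥ v) i‖ ^ 2 := by
  have h : star v ⬝ᵥ v =
      star ((gramEigenvectors M)ᴴ *ᵥ v) ⬝ᵥ ((gramEigenvectors M)ᴴ *ᵥ v) := by
    rw [star_mulVec, ← dotProduct_mulVec, mulVec_mulVec, conjTranspose_conjTranspose,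
      gramEigenvectors_mul_conjTranspose, one_mulVec]
  rw [norm_sq_toLp_eq_re_dotProduct, h, ← norm_sq_toLp_eq_re_dotProduct,
    EuclideanSpace.norm_sq_eq]

variable {M} in
theorem norm_mulVec_le_of_gram_coeff_eq_zero {t : ℝ} (ht : 0 ≤ t) {v : Fin n → ℂ}
    (hv : ∀ i, t < √(gramEigenvalues M i) → ((gramEigenvectors M)ᴴ *ᵥ v) i = 0) :
    ‖WithLp.toLp 2 (M *ᵥ v)‖ ≤ t * ‖WithLp.toLp 2 v‖ := by
  refine le_of_sq_le_sq ?_ (by positivity)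
  rw [mul_pow, norm_sq_mulVec_eq_sum, norm_sq_eq_sum_gramEigenvectors M, Finset.mul_sum]
  refine Finset.sum_le_sum fun i _ => ?_
  by_cases hi : t < √(gramEigenvalues M i)
  · simp [hv i hi]
  · gcongr
    exact (Real.sqrt_le_left ht).1 (not_lt.1 hi)

variable {M} in
theorem lt_norm_mulVec_of_gram_coeff_eq_zero {t : ℝ} (ht : 0 ≤ t) {v : Fin n → ℂ} (hv0 : v ≠ 0)
    (hv : ∀ i, ¬ t < √(gramEigenvalues M i) → ((gramEigenvectors M)ᴴ *ᵥ v) i = 0) :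
    t * ‖WithLp.toLp 2 v‖ < ‖WithLp.toLp 2 (M *ᵥ v)‖ := by
  refine lt_of_pow_lt_pow_left₀ 2 (norm_nonneg _) ?_
  rw [mul_pow, norm_sq_mulVec_eq_sum, norm_sq_eq_sum_gramEigenvectors M, Finset.mul_sum]
  have hle (i : Fin n) (hi : t < √(gramEigenvalues M i)) : t ^ 2 < gramEigenvalues M i :=
    (Real.lt_sqrt ht).1 hi
  obtain ⟨i, hi⟩ : ∃ i, ((gramEigenvectors M)ᴴ *ᵥ v) i ≠ 0 := by
    by_contra! h
    refine hv0 ?_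
    rw [← one_mulVec v, ← gramEigenvectors_mul_conjTranspose M, ← mulVec_mulVec,
      show (gramEigenvectors M)ᴴ *ᵥ v = 0 from funext h, mulVec_zero]
  refine Finset.sum_lt_sum (fun i _ => ?_) ⟨i, Finset.mem_univ i, ?_⟩
  · by_cases hi : t < √(gramEigenvalues M i)
    · gcongr
      exact (hle i hi).le
    · simp [hv i hi]
  · have := hle i (not_imp_comm.1 (hv i) hi)
    gcongr

end SingularValues

open scoped Matrix.Norms.L2Operator

theorem card_lt_sqrt_gramEigenvalues_mul_le {a m n b : ℕ} (X : Matrix (Fin a) (Fin m) ℂ)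
    (M : Matrix (Fin m) (Fin n) ℂ) (Y : Matrix (Fin n) (Fin b) ℂ) {t : ℝ} (ht : 0 ≤ t) :
    Fintype.card {i // ‖X‖ * t * ‖Y‖ < √(gramEigenvalues (X * M * Y) i)} ≤
      Fintype.card {i // t < √(gramEigenvalues M i)} := by
  classical
  set N := X * M * Y with hN
  set s := ‖X‖ * t * ‖Y‖ with hs
  let incl : Matrix (Fin b) {i // s < √(gramEigenvalues N i)} ℂ :=
    (1 : Matrix (Fin b) (Fin b) ℂ).submatrix id Subtype.val
  let T := ((gramEigenvectors M)ᴴ * Y * gramEigenvectors N * incl).submatrix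
    (Subtype.val : {i // t < √(gramEigenvalues M i)} → Fin n) id
  suffices h : Function.Injective T.mulVecLin by
    simpa using LinearMap.finrank_le_finrank_of_injective h
  refine (injective_iff_map_eq_zero T.mulVecLin).2 fun c hc => ?_
  set v := gramEigenvectors N *ᵥ (incl *ᵥ c) with hv
  have hcoord : (gramEigenvectors N)ᴴ *ᵥ v = incl *ᵥ c := by
    rw [hv, mulVec_mulVec, conjTranspose_mul_gramEigenvectors, one_mulVec]
  have hincl (i) : (incl *ᵥ c) (Subtype.val i) = c i := by
    simp [incl, mulVec, dotProduct, one_apply, Subtype.val_inj]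
  have hsmall : ‖WithLp.toLp 2 (N *ᵥ v)‖ ≤ s * ‖WithLp.toLp 2 v‖ := by
    have hM : ‖WithLp.toLp 2 (M *ᵥ (Y *ᵥ v))‖ ≤ t * ‖WithLp.toLp 2 (Y *ᵥ v)‖ := by
      refine norm_mulVec_le_of_gram_coeff_eq_zero ht fun i hi => ?_
      have := congrFun hc ⟨i, hi⟩
      rw [hv, mulVec_mulVec, mulVec_mulVec, mulVec_mulVec]
      simpa [T, mulVec, Matrix.mul_assoc] using this
    calc ‖WithLp.toLp 2 (N *ᵥ v)‖ = ‖WithLp.toLp 2 (X *ᵥ (M *ᵥ (Y *ᵥ v)))‖ := by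
          simp only [hN, mulVec_mulVec, Matrix.mul_assoc]
      _ ≤ ‖X‖ * ‖WithLp.toLp 2 (M *ᵥ (Y *ᵥ v))‖ := l2_opNorm_mulVec X (WithLp.toLp 2 _)
      _ ≤ ‖X‖ * (t * (‖Y‖ * ‖WithLp.toLp 2 v‖)) := by
          gcongr
          exact hM.trans (mul_le_mul_of_nonneg_left (l2_opNorm_mulVec Y (WithLp.toLp 2 v)) ht)
      _ = s * ‖WithLp.toLp 2 v‖ := by rw [hs]; ring
  have hv0 : v = 0 := by
    by_contra hv0
    refine hsmall.not_gt (lt_norm_mulVec_of_gram_coeff_eq_zero (by positivity) hv0 fun i hi => ?_)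
    rw [hcoord]
    simp only [mulVec, dotProduct]
    refine Finset.sum_eq_zero fun j _ => ?_
    have hij : i ≠ j.1 := fun h => hi (h ▸ j.2)
    simp [incl, hij]
  ext i
  rw [← hincl i, ← hcoord, hv0, mulVec_zero]
  rfl

theorem sval_mul_mul_le {a m n b : ℕ} (X : Matrix (Fin a) (Fin m) ℂ)
    (M : Matrix (Fin m) (Fin n) ℂ) (Y : Matrix (Fin n) (Fin b) ℂ) (j : ℕ) :
    sval (X * M * Y) j ≤ ‖X‖ * sval M j * ‖Y‖ := by
  have ht := sval_nonneg M j
  exact (sval_le_iff _ (by positivity) j).2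
    ((card_lt_sqrt_gramEigenvalues_mul_le X M Y ht).trans ((sval_le_iff M ht j).1 le_rfl))

theorem l2_opNorm_le_one_of_conjTranspose_mul_self {m n : ℕ} {M : Matrix (Fin m) (Fin n) ℂ}
    (hM : Mᴴ * M = 1) : ‖M‖ ≤ 1 := by
  have h := l2_opNorm_conjTranspose_mul_self M
  have h1 : ‖(1 : Matrix (Fin n) (Fin n) ℂ)‖ ≤ 1 := by
    rw [← diagonal_one, l2_opNorm_diagonal]
    exact (pi_norm_le_iff_of_nonneg zero_le_one).2 fun _ => by simp
  rw [hM] at h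
  nlinarith [norm_nonneg M]

theorem l2_opNorm_one_sub_le_one {m n : ℕ} {W : Matrix (Fin m) (Fin n) ℂ} (hW : Wᴴ * W = 1) :
    ‖1 - W * Wᴴ‖ ≤ 1 := by
  have hidem : (1 - W * Wᴴ)ᴴ * (1 - W * Wᴴ) = 1 - W * Wᴴ := by
    have : W * Wᴴ * (W * Wᴴ) = W * Wᴴ := by
      rw [Matrix.mul_assoc, ← Matrix.mul_assoc Wᴴ, hW, Matrix.one_mul]
    simp [Matrix.mul_sub, Matrix.sub_mul, this]
  have h := l2_opNorm_conjTranspose_mul_self (1 - W * Wᴴ)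
  rw [hidem] at h
  nlinarith [norm_nonneg (1 - W * Wᴴ)]

theorem l2_opNorm_le_sval_zero {m n : ℕ} (M : Matrix (Fin m) (Fin n) ℂ) : ‖M‖ ≤ sval M 0 := by
  have hs := sval_nonneg M 0
  refine le_of_sq_le_sq ?_ hs
  have hE := l2_opNorm_le_one_of_conjTranspose_mul_self (conjTranspose_mul_gramEigenvectors M)
  have hD : ‖diagonal (fun i => (gramEigenvalues M i : ℂ))‖ ≤ sval M 0 ^ 2 := by
    rw [l2_opNorm_diagonal]
    refine (pi_norm_le_iff_of_nonneg (by positivity)).2 fun i => ?_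
    rw [Complex.norm_real, Real.norm_of_nonneg (gramEigenvalues_nonneg M i)]
    exact (Real.sqrt_le_left hs).1 (sqrt_gramEigenvalues_le_sval_zero M i)
  calc ‖M‖ ^ 2 = ‖gramEigenvectors M * diagonal (fun i => (gramEigenvalues M i : ℂ)) *
        (gramEigenvectors M)ᴴ‖ := by
        rw [← conjTranspose_mul_self_eq_gram, l2_opNorm_conjTranspose_mul_self, sq]
    _ ≤ 1 * sval M 0 ^ 2 * 1 := by
        refine (l2_opNorm_mul _ _).trans ?_
        rw [l2_opNorm_conjTranspose]
        gcongr
        refine (l2_opNorm_mul _ _).trans ?_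
        gcongr
    _ = sval M 0 ^ 2 := by ring

theorem schatten_le_mul_of_sval_le {a b m n : ℕ} {N : Matrix (Fin a) (Fin b) ℂ}
    {M : Matrix (Fin m) (Fin n) ℂ} {C : ℝ} (hC : 0 ≤ C) (h : ∀ j, sval N j ≤ C * sval M j)
    {p : ℝ≥0∞} (hp : 1 ≤ p) : schatten p N ≤ C * schatten p M := by
  rw [schatten, schatten]
  split_ifs with hpt
  · exact h 0
  have hp0 : 0 < p.toReal := ENNReal.toReal_pos (zero_lt_one.trans_le hp).ne' hpt
  have hnn (j : ℕ) := sval_nonneg M j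
  have hsum : ∑ j ∈ Finset.range b, sval N j ^ p.toReal ≤
      C ^ p.toReal * ∑ j ∈ Finset.range n, sval M j ^ p.toReal := calc
    _ ≤ ∑ j ∈ Finset.range b, C ^ p.toReal * sval M j ^ p.toReal :=
        Finset.sum_le_sum fun j _ => by
          rw [← Real.mul_rpow hC (hnn j)]
          exact Real.rpow_le_rpow (sval_nonneg N j) (h j) hp0.le
    _ ≤ ∑ j ∈ Finset.range (max b n), C ^ p.toReal * sval M j ^ p.toReal :=
        Finset.sum_le_sum_of_subset_of_nonneg (Finset.range_mono (le_max_left b n))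
          fun j _ _ => mul_nonneg (Real.rpow_nonneg hC _) (Real.rpow_nonneg (hnn j) _)
    _ = ∑ j ∈ Finset.range n, C ^ p.toReal * sval M j ^ p.toReal := by
        refine (Finset.sum_subset (Finset.range_mono (le_max_right b n)) fun j _ hj => ?_).symm
        rw [sval_eq_zero_of_le M (by simpa using hj), Real.zero_rpow hp0.ne', mul_zero]
    _ = _ := by rw [Finset.mul_sum]
  calc _ ≤ (C ^ p.toReal * ∑ j ∈ Finset.range n, sval M j ^ p.toReal) ^ (1 / p.toReal) :=
        Real.rpow_le_rpow (Finset.sum_nonneg fun j _ => Real.rpow_nonneg (sval_nonneg N j) _)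
          hsum (by positivity)
    _ = _ := by
        rw [Real.mul_rpow (Real.rpow_nonneg hC _)
          (Finset.sum_nonneg fun j _ => Real.rpow_nonneg (hnn j) _), ← Real.rpow_mul hC,
          mul_one_div_cancel hp0.ne', Real.rpow_one]

theorem diagRect_conjTranspose_mul_self (σ : ℕ → ℝ) (off a b : ℕ) :
    (diagRect σ off a b)ᴴ * diagRect σ off a b =
      diagonal fun j : Fin b => if (j : ℕ) < a then (σ (off + j) : ℂ) ^ 2 else 0 := by
  ext i j
  simp only [mul_apply, conjTranspose_apply, diagRect, of_apply, diagonal_apply]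
  by_cases hi : (i : ℕ) < a
  · rw [Finset.sum_eq_single ⟨i, hi⟩]
    · by_cases hij : i = j
      · subst hij
        simp [hi, sq]
      · simp [hij, Fin.val_inj]
    · intro x _ hx
      have : (x : ℕ) ≠ i := fun h => hx (Fin.ext h)
      simp [this]
    · simp
  · rw [Finset.sum_eq_zero]
    · simp [hi]
    · intro x _
      have : (x : ℕ) ≠ i := by have := x.2; omega
      simp [this]

theorem l2_opNorm_diagRect_le {σ : ℕ → ℝ} (hσ0 : ∀ i, 0 ≤ σ i) (hσm : ∀ i j, i ≤ j → σ j ≤ σ i)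
    (off a b : ℕ) : ‖diagRect σ off a b‖ ≤ σ off := by
  refine le_of_sq_le_sq ?_ (hσ0 off)
  rw [sq, ← l2_opNorm_conjTranspose_mul_self, diagRect_conjTranspose_mul_self, l2_opNorm_diagonal]
  have h0 := hσ0 off
  refine (pi_norm_le_iff_of_nonneg (by positivity)).2 fun j => ?_
  split_ifs
  · rw [norm_pow, Complex.norm_real, Real.norm_of_nonneg (hσ0 _)]
    exact pow_le_pow_left₀ (hσ0 _) (hσm _ _ (Nat.le_add_right _ _)) 2
  · rw [norm_zero]
    positivity

open scoped ComplexOrder in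
theorem mul_rpinv_of_rank_eq {a b : ℕ} {M : Matrix (Fin a) (Fin b) ℂ} (hM : M.rank = a) :
    M * rpinv M = 1 := by
  have hunit : IsUnit (M * Mᴴ) := by
    rw [← mulVec_surjective_iff_isUnit]
    have h : (M * Mᴴ).rank = a := by rw [rank_self_mul_conjTranspose, hM]
    have : LinearMap.range (M * Mᴴ).mulVecLin = ⊤ :=
      Submodule.eq_top_of_finrank_eq (by simpa [Matrix.rank] using h)
    exact LinearMap.range_eq_top.1 this
  rw [rpinv, ← Matrix.mul_assoc, mul_nonsing_inv _ ((isUnit_iff_isUnit_det _).1 hunit)]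

section Columns

variable {a b c : ℕ}

theorem colsL_mul_conjTranspose_add_colsR (M : Matrix (Fin a) (Fin (b + c)) ℂ) :
    colsL M * (colsL M)ᴴ + colsR M * (colsR M)ᴴ = M * Mᴴ := by
  ext i j
  simp [mul_apply, colsL, colsR, Fin.sum_univ_add]

theorem colsR_conjTranspose_mul_self {M : Matrix (Fin a) (Fin (b + c)) ℂ} (hM : Mᴴ * M = 1) :
    (colsR M)ᴴ * colsR M = 1 := by
  ext i j
  simpa [mul_apply, colsR, one_apply] using congrFun₂ hM (Fin.natAdd b i) (Fin.natAdd b j)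

theorem mul_colsL_of_mul_eq_mul_diagonal {G : Matrix (Fin a) (Fin a) ℂ}
    {M : Matrix (Fin a) (Fin (b + c)) ℂ} {d : Fin (b + c) → ℂ} (h : G * M = M * diagonal d) :
    G * colsL M = colsL M * diagonal fun j => d (Fin.castAdd c j) := by
  ext i j
  simpa [mul_apply, colsL, diagonal_apply] using congrFun₂ h i (Fin.castAdd c j)

theorem mul_colsR_of_mul_eq_mul_diagonal {G : Matrix (Fin a) (Fin a) ℂ}
    {M : Matrix (Fin a) (Fin (b + c)) ℂ} {d : Fin (b + c) → ℂ} (h : G * M = M * diagonal d) :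
    G * colsR M = colsR M * diagonal fun j => d (Fin.natAdd b j) := by
  ext i j
  simpa [mul_apply, colsR, diagonal_apply] using congrFun₂ h i (Fin.natAdd b j)

theorem pow_mul_eq_mul_pow {G : Matrix (Fin a) (Fin a) ℂ} {M : Matrix (Fin a) (Fin b) ℂ}
    {H : Matrix (Fin b) (Fin b) ℂ} (h : G * M = M * H) (r : ℕ) : G ^ r * M = M * H ^ r := by
  induction r with
  | zero => simp
  | succ r ih => rw [pow_succ, Matrix.mul_assoc, h, ← Matrix.mul_assoc, ih, Matrix.mul_assoc,
      ← pow_succ]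

end Columns

theorem conjTranspose_mul_pow_mul {m n : ℕ} (A : Matrix (Fin m) (Fin n) ℂ) (q : ℕ) :
    Aᴴ * ((A * Aᴴ) ^ q * A) = (Aᴴ * A) ^ (q + 1) := by
  induction q with
  | zero => simp
  | succ q ih =>
    rw [pow_succ' (A * Aᴴ), pow_succ' (Aᴴ * A) (q + 1), ← ih]
    simp only [Matrix.mul_assoc]

/-- Theorem 3.3 (right): Schatten-p norm bound for the sines of the canonical angles
between the column spaces of `V_k` and `V̂`. -/
theorem schatten_angles_right
    {k m₂ n₂ ρ : ℕ} (q : ℕ) (hk : 1 ≤ k)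
    (A : Matrix (Fin (k + m₂)) (Fin (k + n₂)) ℂ)
    (U : Matrix (Fin (k + m₂)) (Fin (k + m₂)) ℂ)
    (V : Matrix (Fin (k + n₂)) (Fin (k + n₂)) ℂ)
    (σ : ℕ → ℝ)
    (hU : Uᴴ * U = 1) (hU' : U * Uᴴ = 1)
    (hV : Vᴴ * V = 1) (hV' : V * Vᴴ = 1)
    (hσ0 : ∀ i, 0 ≤ σ i) (hσm : ∀ i j, i ≤ j → σ j ≤ σ i)
    (hA : A = U * diagRect σ 0 (k + m₂) (k + n₂) * Vᴴ)
    (hrank : 0 < σ (k - 1)) (hgap : σ k < σ (k - 1))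
    (Ω : Matrix (Fin (k + n₂)) (Fin (k + ρ)) ℂ)
    (hΩ : ((colsL V)ᴴ * Ω).rank = k)
    (Q : Matrix (Fin (k + m₂)) (Fin (k + ρ)) ℂ)
    (R : Matrix (Fin (k + ρ)) (Fin (k + ρ)) ℂ)
    (hQ : Qᴴ * Q = 1) (hR : R.BlockTriangular id)
    (hQR : (A * Aᴴ) ^ q * A * Ω = Q * R)
    (UB : Matrix (Fin (k + ρ)) (Fin (k + ρ)) ℂ)
    (Vh : Matrix (Fin (k + n₂)) (Fin (k + ρ)) ℂ)
    (σh : ℕ → ℝ)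
    (hUB : UBᴴ * UB = 1) (hUB' : UB * UBᴴ = 1)
    (hVh : Vhᴴ * Vh = 1)
    (hσh0 : ∀ i, 0 ≤ σh i) (hσhm : ∀ i j, i ≤ j → σh j ≤ σh i)
    (hB : Qᴴ * A = UB * diagRect σh 0 (k + ρ) (k + ρ) * Vhᴴ)
    :
    ∀ p : ℝ≥0∞, 1 ≤ p →
      schatten p ((1 - Vh * Vhᴴ) * colsL V) ≤
        (σ k / σ (k - 1)) ^ (2 * q + 1) * (schatten p (diagRect σ k m₂ n₂) / σ (k - 1)) * sval ((colsR V)ᴴ * Ω * rpinv ((colsL V)ᴴ * Ω)) 0 := by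
  intro p hp
  have hσk := hσ0 k
  set D := diagRect σ k m₂ n₂ with hD
  set P := 1 - Vh * Vhᴴ with hP
  set VL := colsL V with hVL
  set VR := colsR V with hVR
  set W := VRᴴ * Ω * rpinv (VLᴴ * Ω) with hW
  let S : Fin k → ℂ := fun j => (σ j : ℂ) ^ 2
  have hσpos (j : Fin k) : σ (k - 1) ≤ σ j := hσm _ _ (by omega)
  have hG : Aᴴ * A * V = V * diagonal fun j : Fin (k + n₂) =>
      if (j : ℕ) < k + m₂ then (σ (0 + j) : ℂ) ^ 2 else 0 := by
    rw [← diagRect_conjTranspose_mul_self, hA]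
    simp only [conjTranspose_mul, conjTranspose_conjTranspose, Matrix.mul_assoc, hV,
      Matrix.mul_one]
    rw [← Matrix.mul_assoc Uᴴ, hU, Matrix.one_mul]
  have hGL : Aᴴ * A * VL = VL * diagonal S := by
    rw [hVL, mul_colsL_of_mul_eq_mul_diagonal hG]
    congr 2
    ext j
    have : (j : ℕ) < k + m₂ := by omega
    simp [S, this]
  have hGR : Aᴴ * A * VR = VR * (Dᴴ * D) := by
    rw [hVR, mul_colsR_of_mul_eq_mul_diagonal hG, hD, diagRect_conjTranspose_mul_self]
    simp
  have hPZ : P * ((Aᴴ * A) ^ (q + 1) * Ω) = 0 := by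
    have hPVh : P * Vh = 0 := by
      rw [hP, Matrix.sub_mul, Matrix.mul_assoc, hVh, Matrix.one_mul, Matrix.mul_one, sub_self]
    have hAQ : Aᴴ * Q = Vh * (UB * diagRect σh 0 (k + ρ) (k + ρ))ᴴ := by
      simpa using congrArg conjTranspose hB
    rw [← conjTranspose_mul_pow_mul, Matrix.mul_assoc, hQR, ← Matrix.mul_assoc, ← Matrix.mul_assoc,
      Matrix.mul_assoc P, hAQ, ← Matrix.mul_assoc P, hPVh, Matrix.zero_mul, Matrix.zero_mul]
  have hΩsplit : Ω = VL * (VLᴴ * Ω) + VR * (VRᴴ * Ω) := by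
    rw [← Matrix.mul_assoc, ← Matrix.mul_assoc, ← Matrix.add_mul,
      colsL_mul_conjTranspose_add_colsR, hV', Matrix.one_mul]
  have hZ : (Aᴴ * A) ^ (q + 1) * Ω * rpinv (VLᴴ * Ω) =
      VL * diagonal S ^ (q + 1) + VR * (Dᴴ * D) ^ (q + 1) * W := by
    conv_lhs => rw [hΩsplit]
    rw [Matrix.mul_add, Matrix.add_mul, ← Matrix.mul_assoc _ VL, ← Matrix.mul_assoc _ VR,
      pow_mul_eq_mul_pow hGL, pow_mul_eq_mul_pow hGR, Matrix.mul_assoc _ (VLᴴ * Ω), ← hΩsplit,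
      mul_rpinv_of_rank_eq hΩ, Matrix.mul_one, Matrix.mul_assoc _ (VRᴴ * Ω), ← hW]
  have hSinv : diagonal S ^ (q + 1) * diagonal (fun j => (S j ^ (q + 1))⁻¹) = 1 := by
    rw [diagonal_pow, diagonal_mul_diagonal, ← diagonal_one]
    congr 1
    ext j
    have : (σ j : ℂ) ≠ 0 := by exact_mod_cast (hrank.trans_le (hσpos j)).ne'
    exact mul_inv_cancel₀ (pow_ne_zero _ (pow_ne_zero _ this))
  have hfactor : P * VL = -(P * VR * (Dᴴ * D) ^ q * Dᴴ) * D *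
      (W * diagonal (fun j => (S j ^ (q + 1))⁻¹)) := by
    have h0 : P * (VL * diagonal S ^ (q + 1) + VR * (Dᴴ * D) ^ (q + 1) * W) = 0 := by
      rw [← hZ, ← Matrix.mul_assoc, hPZ, Matrix.zero_mul]
    rw [Matrix.mul_add, add_eq_zero_iff_eq_neg] at h0
    calc P * VL = P * (VL * diagonal S ^ (q + 1)) *
          diagonal (fun j => (S j ^ (q + 1))⁻¹) := by
          rw [Matrix.mul_assoc, Matrix.mul_assoc, hSinv, Matrix.mul_one]
      _ = _ := by
          rw [h0, pow_succ]
          simp only [Matrix.mul_assoc, Matrix.neg_mul]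
  have hDnorm : ‖D‖ ≤ σ k := l2_opNorm_diagRect_le hσ0 hσm k m₂ n₂
  have hX : ‖-(P * VR * (Dᴴ * D) ^ q * Dᴴ)‖ ≤ σ k ^ (2 * q + 1) := by
    have hpow (r : ℕ) : ‖P * VR * (Dᴴ * D) ^ r‖ ≤ (σ k ^ 2) ^ r := by
      induction r with
      | zero =>
        rw [pow_zero, Matrix.mul_one, pow_zero]
        exact (l2_opNorm_mul _ _).trans (mul_le_one₀ (l2_opNorm_one_sub_le_one hVh)
          (norm_nonneg _) (l2_opNorm_le_one_of_conjTranspose_mul_self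
            (colsR_conjTranspose_mul_self hV)))
      | succ r ih =>
        rw [pow_succ, ← Matrix.mul_assoc, pow_succ]
        refine (l2_opNorm_mul _ _).trans ?_
        rw [l2_opNorm_conjTranspose_mul_self, ← sq]
        gcongr
    rw [norm_neg, pow_succ, pow_mul]
    refine (l2_opNorm_mul _ _).trans ?_
    rw [l2_opNorm_conjTranspose]
    exact mul_le_mul (hpow q) hDnorm (norm_nonneg _) (by positivity)
  have hY : ‖W * diagonal (fun j => (S j ^ (q + 1))⁻¹)‖ ≤
      sval W 0 * ((σ (k - 1)) ^ (2 * q + 2))⁻¹ := by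
    refine (l2_opNorm_mul _ _).trans
      (mul_le_mul (l2_opNorm_le_sval_zero W) ?_ (norm_nonneg _) (sval_nonneg W 0))
    rw [l2_opNorm_diagonal]
    refine (pi_norm_le_iff_of_nonneg (by positivity)).2 fun j => ?_
    rw [norm_inv, norm_pow, norm_pow, Complex.norm_real, Real.norm_of_nonneg (hσ0 j), ← pow_mul,
      show 2 * (q + 1) = 2 * q + 2 by ring]
    have := hσpos j
    gcongr
  have hWnn := sval_nonneg W 0
  have hbound (j : ℕ) : sval (P * VL) j ≤
      σ k ^ (2 * q + 1) * (sval W 0 * ((σ (k - 1)) ^ (2 * q + 2))⁻¹) * sval D j := by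
    have hDj := sval_nonneg D j
    rw [hfactor]
    refine (sval_mul_mul_le _ _ _ j).trans ?_
    calc _ ≤ σ k ^ (2 * q + 1) * sval D j * (sval W 0 * ((σ (k - 1)) ^ (2 * q + 2))⁻¹) := by
          gcongr
      _ = _ := by ring
  refine (schatten_le_mul_of_sval_le (by positivity) hbound hp).trans_eq ?_
  have := hrank.ne'
  rw [div_pow]
  field_simp
  ring
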